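/- arXiv:2302.08925 — 2 statements merged into one kernel-verified Lean document; each statement's English description precedes it below -/
import Mathlib

section
/- Let m, n ≥ 1 and data η, θ : {1,…,m} → ℝ with η_i, θ_i ∈ (−π/2, π/2), F : {0,…,n} → ℝ, and z : {0,…,n} → ℝ with z_β ≠ z_{β−1}. Set C_0 = 1, C_i = ∏_{α=1}^{i}(cos η_α / cos θ_α). For t ∈ ℝ assume C_i² + t > 0 for 0 ≤ i ≤ m, C_{i−1}² sin²η_i ≤ C_{i−1}² + t and C_i² sin²θ_i ≤ C_i² + t for 1 ≤ i ≤ m, and (Δ_β z)² ≥ t (Δ_β F)² for 1 ≤ β ≤ n, where Δ_β z = z_β − z_{β−1}, Δ_β F = F_β − F_{β−1}. Define C_i(t) = √(C_i² + t), η_i(t) = arcsin( C_{i−1} sin η_i / C_{i−1}(t) ), θ_i(t) = arcsin( C_i sin θ_i / C_i(t) ), φ_i(t) = ∑_{α=1}^{i}(η_α(t) + θ_α(t)) with φ_0(t) = 0, z_j(t) = z_0 + ∑_{β=1}^{j} sign(Δ_β z)·√( (Δ_β z)² − t (Δ_β F)² ), and σ_{ij}(t) = ( C_i(t) F_j cos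 φ_i(t), C_i(t) F_j sin φ_i(t), z_j(t) ) ∈ ℝ³. Then for every admissible t, every 1 ≤ i ≤ m and 1 ≤ j ≤ n, all six pairwise Euclidean distances among the four points σ_{i−1,j−1}(t), σ_{i,j−1}(t), σ_{ij}(t), σ_{i−1,j}(t) equal the corresponding pairwise distances at t = 0; i.e. each face of the axial T-hedron σ(t) is congruent to the corresponding face of σ(0). -/
open Real Finset

/-- A vector in Euclidean space `ℝ³` given by its three coordinates. -/
noncomputable def e3 (x y z : ℝ) : EuclideanSpace ℝ (Fin 3) := !₂[x, y, z]

/-!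
Look at one face in the horizontal frame adapted to it: the first axis is perpendicular to the
horizontal edges of the face. The vertex on the profile `k` at level `l` has coordinates
`(F_l h, F_l w_k, z_l)`, where `h` is the distance of the axis from the line through the edge scaled
to `F = 1`, and the offsets `w_k` along that line are `-C_{i-1} sin η_i` and `C_i sin θ_i`. The
deformation keeps the offsets fixed, replaces `h²` by `h² + t` and `(Δz)²` by `(Δz)² - t (ΔF)²`, so
every squared distance `(ΔF)² h² + (Δ(F w))² + (Δz)²` is unchanged.
-/

@[to_additive sum_Icc_one_eq_sum_pred_add]
lemma prod_Icc_one_eq_prod_pred_mul {M : Type*} [CommMonoid M] (f : ℕ → M) {i : ℕ} (hi : 1 ≤ i) :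
    ∏ α ∈ Icc 1 i, f α = (∏ α ∈ Icc 1 (i - 1), f α) * f i := by
  obtain ⟨k, rfl⟩ := Nat.exists_eq_add_of_le' hi
  exact prod_Icc_succ_top (by omega) f

lemma mem_prod_of_mem_quad {α β : Type*} {a b : α} {c d : β} {p : α × β}
    (hp : p ∈ ({(a, c), (b, c), (b, d), (a, d)} : Set (α × β))) :
    (p.1 = a ∨ p.1 = b) ∧ (p.2 = c ∨ p.2 = d) := by
  rcases hp with rfl | rfl | rfl | rfl <;> simp

lemma sign_mul_sqrt_sq {x y : ℝ} (hx : x ≠ 0) (hy : 0 ≤ y) : (Real.sign x * √y) ^ 2 = y := by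
  rcases Real.sign_apply_eq_of_ne_zero x hx with h | h <;> simp [h, Real.sq_sqrt hy]

section Arcsin

variable {R h w : ℝ}

lemma mul_sin_arcsin_div (hR : 0 < R) (hw : |w| ≤ R) : R * sin (arcsin (w / R)) = w := by
  have hwR : |w / R| ≤ 1 := by rwa [abs_div, abs_of_pos hR, div_le_one hR]
  rw [sin_arcsin (abs_le.mp hwR).1 (abs_le.mp hwR).2, mul_div_cancel₀ _ hR.ne']

lemma mul_cos_arcsin_div (hR : 0 < R) (hh : 0 ≤ h) (hRw : h ^ 2 + w ^ 2 = R ^ 2) :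
    R * cos (arcsin (w / R)) = h := by
  have hsq : 1 - (w / R) ^ 2 = (h / R) ^ 2 := by
    field_simp
    linarith
  rw [cos_arcsin, hsq, Real.sqrt_sq (by positivity), mul_div_cancel₀ _ hR.ne']

end Arcsin

/-- The point at height `u` whose horizontal projection is `f` times the point with coordinates
`(h, w)` in the orthonormal frame rotated by the angle `ψ`. For a face of an axial T-hedron, `ψ` is
the direction normal to its horizontal edges. -/
noncomputable def framePoint (ψ h w f u : ℝ) : EuclideanSpace ℝ (Fin 3) :=
  e3 (f * (h * cos ψ - w * sin ψ)) (f * (h * sin ψ + w * cos ψ)) u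

lemma dist_framePoint (ψ h w f u w' f' u' : ℝ) :
    dist (framePoint ψ h w f u) (framePoint ψ h w' f' u') =
      √((f - f') ^ 2 * h ^ 2 + (f * w - f' * w') ^ 2 + (u - u') ^ 2) := by
  rw [EuclideanSpace.dist_eq]
  congr 1
  simp only [framePoint, e3, Fin.sum_univ_three, Real.dist_eq, sq_abs, PiLp.toLp_apply,
    Matrix.cons_val_zero, Matrix.cons_val_one, Matrix.cons_val]
  linear_combination ((f - f') ^ 2 * h ^ 2 + (f * w - f' * w') ^ 2) * sin_sq_add_cos_sq ψ

lemma e3_polar_eq_framePoint {R h w : ℝ} (hR : 0 < R) (hh : 0 ≤ h) (hRw : h ^ 2 + w ^ 2 = R ^ 2)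
    (ψ f u : ℝ) :
    e3 (R * f * cos (ψ + arcsin (w / R))) (R * f * sin (ψ + arcsin (w / R))) u =
      framePoint ψ h w f u := by
  have hcos := mul_cos_arcsin_div hR hh hRw
  have hw : |w| ≤ R := abs_le_of_sq_le_sq (by linarith [sq_nonneg h]) hR.le
  have hsin := mul_sin_arcsin_div hR hw
  rw [framePoint, cos_add, sin_add]
  congr 1
  · linear_combination f * cos ψ * hcos - f * sin ψ * hsin
  · linear_combination f * sin ψ * hcos + f * cos ψ * hsin

/-- The data of an axial T-hedron with `m × n` faces; only the entries with indices up to `m`,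
respectively `n`, matter. The product formula for `C` is replaced by the squared recursion
`C_i² cos² θ_i = C_{i-1}² cos² η_i`, which leaves `C_0` and the signs free. -/
structure AxialTHedron (m n : ℕ) where
  /-- The angle from the profile plane `i - 1` to the normal of the horizontal edge `i`. -/
  η : ℕ → ℝ
  /-- The angle from the normal of the horizontal edge `i` to the profile plane `i`. -/
  θ : ℕ → ℝ
  /-- The signed distances from the axis on the initial profile. -/
  F : ℕ → ℝ
  /-- The heights of the trajectory planes. -/
  z : ℕ → ℝ
  /-- The scaling factors of the profiles. -/
  C : ℕ → ℝ
  sq_mul_cos_sq : ∀ i ∈ Icc 1 m, C i ^ 2 * cos (θ i) ^ 2 = C (i - 1) ^ 2 * cos (η i) ^ 2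
  z_ne : ∀ j ∈ Icc 1 n, z j ≠ z (j - 1)

namespace AxialTHedron

variable {m n : ℕ} (T : AxialTHedron m n) (s : ℝ)

/-- The deformed scaling factor `C_i(s)`. -/
noncomputable def radius (i : ℕ) : ℝ := √(T.C i ^ 2 + s)

/-- The deformed angle `η_i(s)`. -/
noncomputable def etaAngle (i : ℕ) : ℝ := arcsin (T.C (i - 1) * sin (T.η i) / T.radius s (i - 1))

/-- The deformed angle `θ_i(s)`. -/
noncomputable def thetaAngle (i : ℕ) : ℝ := arcsin (T.C i * sin (T.θ i) / T.radius s i)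

/-- The direction `φ_i(s)` of the deformed profile plane. -/
noncomputable def azimuth (i : ℕ) : ℝ := ∑ α ∈ Icc 1 i, (T.etaAngle s α + T.thetaAngle s α)

/-- The deformed height `z_j(s)`. -/
noncomputable def height (j : ℕ) : ℝ :=
  T.z 0 + ∑ β ∈ Icc 1 j, Real.sign (T.z β - T.z (β - 1)) *
    √((T.z β - T.z (β - 1)) ^ 2 - s * (T.F β - T.F (β - 1)) ^ 2)

/-- The vertex `σ_{ij}(s)` of the deformed T-hedron. -/
noncomputable def vertex (i j : ℕ) : EuclideanSpace ℝ (Fin 3) :=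
  e3 (T.radius s i * T.F j * cos (T.azimuth s i)) (T.radius s i * T.F j * sin (T.azimuth s i))
    (T.height s j)

/-- The parameters `s` at which all formulas of the deformation make sense. The second condition
says `0 ≤ C_{i-1}² cos² η_i + s`, a radicand that is the same at both ends of the edge `i`. -/
structure IsAdmissible : Prop where
  radicand_pos : ∀ i ≤ m, 0 < T.C i ^ 2 + s
  sq_mul_sin_sq_le : ∀ i ∈ Icc 1 m, T.C (i - 1) ^ 2 * sin (T.η i) ^ 2 ≤ T.C (i - 1) ^ 2 + s
  mul_sq_le : ∀ j ∈ Icc 1 n, s * (T.F j - T.F (j - 1)) ^ 2 ≤ (T.z j - T.z (j - 1)) ^ 2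

/-- The distance from the axis to the horizontal line containing the edge `i` scaled to `F = 1`. -/
noncomputable def apothem (i : ℕ) : ℝ := √(T.C (i - 1) ^ 2 * cos (T.η i) ^ 2 + s)

/-- The direction of the perpendicular from the axis to the edge `i`. -/
noncomputable def edgeNormal (i : ℕ) : ℝ := T.azimuth s (i - 1) + T.etaAngle s i

/-- The signed position, along the edge `i` scaled to `F = 1` and measured from the foot of the
perpendicular from the axis, of the endpoint on the profile `k`; meant for `k = i - 1` and
`k = i`. -/
noncomputable def offset (i k : ℕ) : ℝ :=
  if k = i then T.C i * sin (T.θ i) else -(T.C (i - 1) * sin (T.η i))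

variable {T s} {i j k k' l l' : ℕ}

lemma isAdmissible_zero (hC : ∀ i ≤ m, T.C i ≠ 0) : T.IsAdmissible 0 where
  radicand_pos i hi := by
    have := hC i hi
    positivity
  sq_mul_sin_sq_le i _ := by
    rw [add_zero]
    exact mul_le_of_le_one_right (sq_nonneg _) (sin_sq_le_one _)
  mul_sq_le j _ := by
    rw [zero_mul]
    positivity

lemma IsAdmissible.radius_sq (hs : T.IsAdmissible s) (hi : i ≤ m) :
    T.radius s i ^ 2 = T.C i ^ 2 + s :=
  Real.sq_sqrt (hs.radicand_pos i hi).le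

lemma IsAdmissible.apothem_sq (hs : T.IsAdmissible s) (hi : i ∈ Icc 1 m) :
    T.apothem s i ^ 2 = T.C (i - 1) ^ 2 * cos (T.η i) ^ 2 + s := by
  refine Real.sq_sqrt ?_
  rw [cos_sq']
  linarith [hs.sq_mul_sin_sq_le i hi]

lemma IsAdmissible.apothem_sq_add_offset_sq (hs : T.IsAdmissible s) (hi : i ∈ Icc 1 m)
    (hk : k = i - 1 ∨ k = i) : T.apothem s i ^ 2 + T.offset i k ^ 2 = T.radius s k ^ 2 := by
  obtain ⟨one_le, le_m⟩ := mem_Icc.mp hi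
  rw [hs.apothem_sq hi, hs.radius_sq (by omega), offset]
  rcases hk with rfl | rfl
  · rw [if_neg (by omega)]
    linear_combination T.C (i - 1) ^ 2 * sin_sq_add_cos_sq (T.η i)
  · rw [if_pos rfl]
    linear_combination T.C k ^ 2 * sin_sq_add_cos_sq (T.θ k) - T.sq_mul_cos_sq k hi

lemma azimuth_eq_edgeNormal_add_arcsin (hi : 1 ≤ i) (hk : k = i - 1 ∨ k = i) :
    T.azimuth s k = T.edgeNormal s i + arcsin (T.offset i k / T.radius s k) := by
  rcases hk with rfl | rfl
  · rw [offset, if_neg (by omega), neg_div, arcsin_neg, edgeNormal, etaAngle, add_neg_cancel_right]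
  · rw [offset, if_pos rfl, edgeNormal, ← thetaAngle, add_assoc, azimuth,
      sum_Icc_one_eq_sum_pred_add _ hi, azimuth]

lemma IsAdmissible.vertex_eq_framePoint (hs : T.IsAdmissible s) (hi : i ∈ Icc 1 m)
    (hk : k = i - 1 ∨ k = i) (j : ℕ) :
    T.vertex s k j =
      framePoint (T.edgeNormal s i) (T.apothem s i) (T.offset i k) (T.F j) (T.height s j) := by
  obtain ⟨one_le, le_m⟩ := mem_Icc.mp hi
  have radius_pos : 0 < T.radius s k := Real.sqrt_pos.mpr (hs.radicand_pos k (by omega))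
  rw [vertex, azimuth_eq_edgeNormal_add_arcsin one_le hk]
  exact e3_polar_eq_framePoint radius_pos (Real.sqrt_nonneg _)
    (hs.apothem_sq_add_offset_sq hi hk) _ _ _

lemma IsAdmissible.height_sub_height_pred_sq (hs : T.IsAdmissible s) (hj : j ∈ Icc 1 n) :
    (T.height s j - T.height s (j - 1)) ^ 2 =
      (T.z j - T.z (j - 1)) ^ 2 - s * (T.F j - T.F (j - 1)) ^ 2 := by
  rw [height, height, sum_Icc_one_eq_sum_pred_add _ (mem_Icc.mp hj).1, add_sub_add_left_eq_sub,
    add_sub_cancel_left]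
  exact sign_mul_sqrt_sq (sub_ne_zero.mpr (T.z_ne j hj)) (sub_nonneg.mpr (hs.mul_sq_le j hj))

lemma IsAdmissible.height_sub_height_sq (hs : T.IsAdmissible s) (hj : j ∈ Icc 1 n)
    (hl : l = j - 1 ∨ l = j) (hl' : l' = j - 1 ∨ l' = j) :
    (T.height s l - T.height s l') ^ 2 =
      (T.z l - T.z l') ^ 2 - s * (T.F l - T.F l') ^ 2 := by
  have hstep := hs.height_sub_height_pred_sq hj
  rcases hl with rfl | rfl <;> rcases hl' with rfl | rfl <;> linarith

lemma IsAdmissible.dist_vertex (hs : T.IsAdmissible s) (hi : i ∈ Icc 1 m) (hj : j ∈ Icc 1 n)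
    (hk : k = i - 1 ∨ k = i) (hk' : k' = i - 1 ∨ k' = i)
    (hl : l = j - 1 ∨ l = j) (hl' : l' = j - 1 ∨ l' = j) :
    dist (T.vertex s k l) (T.vertex s k' l') =
      √((T.F l - T.F l') ^ 2 * (T.C (i - 1) ^ 2 * cos (T.η i) ^ 2) +
        (T.F l * T.offset i k - T.F l' * T.offset i k') ^ 2 + (T.z l - T.z l') ^ 2) := by
  rw [hs.vertex_eq_framePoint hi hk, hs.vertex_eq_framePoint hi hk', dist_framePoint,
    hs.apothem_sq hi, hs.height_sub_height_sq hj hl hl']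
  ring_nf

end AxialTHedron

theorem stmt_7_general {m n : ℕ} (T : AxialTHedron m n) {s t : ℝ} (hs : T.IsAdmissible s)
    (ht : T.IsAdmissible t) :
    ∀ i ∈ Icc 1 m, ∀ j ∈ Icc 1 n,
      ∀ p ∈ ({(i - 1, j - 1), (i, j - 1), (i, j), (i - 1, j)} : Set (ℕ × ℕ)),
      ∀ q ∈ ({(i - 1, j - 1), (i, j - 1), (i, j), (i - 1, j)} : Set (ℕ × ℕ)),
        dist (T.vertex s p.1 p.2) (T.vertex s q.1 q.2) =
          dist (T.vertex t p.1 p.2) (T.vertex t q.1 q.2) := by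
  intro i hi j hj p hp q hq
  obtain ⟨hp₁, hp₂⟩ := mem_prod_of_mem_quad hp
  obtain ⟨hq₁, hq₂⟩ := mem_prod_of_mem_quad hq
  rw [hs.dist_vertex hi hj hp₁ hq₁ hp₂ hq₂, ht.dist_vertex hi hj hp₁ hq₁ hp₂ hq₂]

section CosProduct

variable {m : ℕ} {η θ C : ℕ → ℝ}

lemma sq_mul_cos_sq_of_eq_prod (hC : ∀ i, C i = ∏ α ∈ Icc 1 i, (cos (η α) / cos (θ α)))
    (hθ : ∀ i ∈ Icc 1 m, cos (θ i) ≠ 0) :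
    ∀ i ∈ Icc 1 m, C i ^ 2 * cos (θ i) ^ 2 = C (i - 1) ^ 2 * cos (η i) ^ 2 := by
  intro i hi
  rw [← mul_pow, hC i, prod_Icc_one_eq_prod_pred_mul _ (mem_Icc.mp hi).1, ← hC, mul_assoc,
    div_mul_cancel₀ _ (hθ i hi), mul_pow]

lemma ne_zero_of_eq_prod (hC : ∀ i, C i = ∏ α ∈ Icc 1 i, (cos (η α) / cos (θ α)))
    (hη : ∀ i ∈ Icc 1 m, cos (η i) ≠ 0) (hθ : ∀ i ∈ Icc 1 m, cos (θ i) ≠ 0) :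
    ∀ i ≤ m, C i ≠ 0 := by
  intro i hi
  rw [hC i, prod_ne_zero_iff]
  intro α hα
  have hαm : α ∈ Icc 1 m := Icc_subset_Icc_right hi hα
  exact div_ne_zero (hη α hαm) (hθ α hαm)

end CosProduct

/-- **Theorem 3.5.** The explicit isometric deformation of an axial T-hedron
`σ_{ij} = (C_i F_j cos φ_i, C_i F_j sin φ_i, z_j)`: for every admissible `t`, each face of
`σ t` is congruent to the corresponding face of `σ 0`. -/
theorem stmt_7 (m n : ℕ) (hm : 1 ≤ m) (hn : 1 ≤ n)
    (η θ : ℕ → ℝ) (F z C : ℕ → ℝ)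
    (hηr : ∀ i ∈ Icc 1 m, η i ∈ Set.Ioo (-(π / 2)) (π / 2))
    (hθr : ∀ i ∈ Icc 1 m, θ i ∈ Set.Ioo (-(π / 2)) (π / 2))
    (hzne : ∀ β ∈ Icc 1 n, z β ≠ z (β - 1))
    (hC : ∀ i, C i = ∏ α ∈ Icc 1 i, (cos (η α) / cos (θ α)))
    (t : ℝ)
    (htC : ∀ i ≤ m, 0 < C i ^ 2 + t)
    (htη : ∀ i ∈ Icc 1 m, C (i - 1) ^ 2 * sin (η i) ^ 2 ≤ C (i - 1) ^ 2 + t)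
    (htθ : ∀ i ∈ Icc 1 m, C i ^ 2 * sin (θ i) ^ 2 ≤ C i ^ 2 + t)
    (htz : ∀ β ∈ Icc 1 n, t * (F β - F (β - 1)) ^ 2 ≤ (z β - z (β - 1)) ^ 2)
    (Ct ηt θt φt zt : ℝ → ℕ → ℝ)
    (hCt : ∀ s i, Ct s i = Real.sqrt (C i ^ 2 + s))
    (hηt : ∀ s, ∀ i ∈ Icc 1 m, ηt s i = arcsin (C (i - 1) * sin (η i) / Ct s (i - 1)))
    (hθt : ∀ s, ∀ i ∈ Icc 1 m, θt s i = arcsin (C i * sin (θ i) / Ct s i))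
    (hφt : ∀ s i, φt s i = ∑ α ∈ Icc 1 i, (ηt s α + θt s α))
    (hzt : ∀ s j, zt s j = z 0 + ∑ β ∈ Icc 1 j, Real.sign (z β - z (β - 1)) *
        Real.sqrt ((z β - z (β - 1)) ^ 2 - s * (F β - F (β - 1)) ^ 2))
    (σ : ℝ → ℕ → ℕ → EuclideanSpace ℝ (Fin 3))
    (hσ : ∀ s i j, σ s i j =
        e3 (Ct s i * F j * cos (φt s i)) (Ct s i * F j * sin (φt s i)) (zt s j)) :
    ∀ i ∈ Icc 1 m, ∀ j ∈ Icc 1 n,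
      ∀ p ∈ ({(i - 1, j - 1), (i, j - 1), (i, j), (i - 1, j)} : Set (ℕ × ℕ)),
      ∀ q ∈ ({(i - 1, j - 1), (i, j - 1), (i, j), (i - 1, j)} : Set (ℕ × ℕ)),
        dist (σ t p.1 p.2) (σ t q.1 q.2) = dist (σ 0 p.1 p.2) (σ 0 q.1 q.2) := by
  have hcosη : ∀ i ∈ Icc 1 m, cos (η i) ≠ 0 := fun i hi ↦ (cos_pos_of_mem_Ioo (hηr i hi)).ne'
  have hcosθ : ∀ i ∈ Icc 1 m, cos (θ i) ≠ 0 := fun i hi ↦ (cos_pos_of_mem_Ioo (hθr i hi)).ne'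
  let T : AxialTHedron m n := ⟨η, θ, F, z, C, sq_mul_cos_sq_of_eq_prod hC hcosθ, hzne⟩
  have hφ (s : ℝ) {i : ℕ} (hi : i ≤ m) : φt s i = T.azimuth s i := by
    rw [hφt]
    refine sum_congr rfl fun α hα ↦ ?_
    have hαm := Icc_subset_Icc_right hi hα
    rw [hηt s α hαm, hθt s α hαm, hCt, hCt]
    rfl
  have hσT (s : ℝ) {i : ℕ} (j : ℕ) (hi : i ≤ m) : σ s i j = T.vertex s i j := by
    rw [hσ, hφ s hi, hCt, hzt]
    rfl
  intro i hi j hj p hp q hq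
  have le_m {k : ℕ} (hk : k = i - 1 ∨ k = i) : k ≤ m := by grind
  have hpm := le_m (mem_prod_of_mem_quad hp).1
  have hqm := le_m (mem_prod_of_mem_quad hq).1
  rw [hσT t _ hpm, hσT t _ hqm, hσT 0 _ hpm, hσT 0 _ hqm]
  exact stmt_7_general T ⟨htC, htη, htz⟩
    (AxialTHedron.isAdmissible_zero (ne_zero_of_eq_prod hC hcosη hcosθ)) i hi j hj p hp q hq
end

section
/- Let g, ψ : [0,a] → ℝ with g continuous and ψ continuously differentiable, and let f, z : [0,b] → ℝ be continuously differentiable with z'(v) > 0 for all v. Fix t ∈ ℝ such that z'(v)² + (1 − e^{−2t})·f'(v)² ≥ 0 for all v. Define nᵗ(u) = (cos(e^tψ(u)), sin(e^tψ(u))), γᵗ(u) = ∫₀ᵘ g(w)·(−sin(e^tψ(w)), cos(e^tψ(w))) dw, zᵗ(v) = ∫₀ᵛ √( z'(w)² + (1 − e^{−2t}) f'(w)² ) dw, and σᵗ(u,v) = ( γᵗ(u) + e^{−t} f(v)·nᵗ(u), zᵗ(v) ) ∈ ℝ³. Then for all (u,v): ‖σᵗ_u(u,v)‖² = ( g(u)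 + f(v)·ψ'(u) )², ⟪σᵗ_u(u,v), σᵗ_v(u,v)⟫ = 0, and ‖σᵗ_v(u,v)‖² = f'(v)² + z'(v)². In particular the first fundamental form of σᵗ is independent of t, so the family σᵗ is an isometric deformation of the molding surface σ⁰ in the class of molding surfaces. -/
open Real Set

/-!
On a molding surface the frame `(cos ψ, sin ψ)`, `(-sin ψ, cos ψ)` makes the coordinate lines
orthogonal, with `E = (g + f ψ')²` and `G = f'² + z'²`. Passing from `(ψ, f)` to `(eᵗψ, e⁻ᵗf)`
preserves the product `f ψ'`, hence `E`, and `zᵗ` is the height that restores `G`: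
`(e⁻ᵗf')² + (z'² + (1 - e⁻²ᵗ) f'²) = f'² + z'²`.
-/

theorem inner_e3 (x y z x' y' z' : ℝ) :
    inner ℝ (e3 x y z) (e3 x' y' z') = x * x' + y * y' + z * z' := by
  simp only [e3, PiLp.inner_apply, Fin.sum_univ_three, Real.inner_apply, Matrix.cons_val]

theorem norm_e3_sq (x y z : ℝ) : ‖e3 x y z‖ ^ 2 = x ^ 2 + y ^ 2 + z ^ 2 := by
  rw [← real_inner_self_eq_norm_sq, inner_e3]
  ring

theorem hasDerivWithinAt_e3 {x y z : ℝ → ℝ} {x' y' z' : ℝ} {s : Set ℝ} {r : ℝ}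
    (hx : HasDerivWithinAt x x' s r) (hy : HasDerivWithinAt y y' s r)
    (hz : HasDerivWithinAt z z' s r) :
    HasDerivWithinAt (fun r ↦ e3 (x r) (y r) (z r)) (e3 x' y' z') s r := by
  have hcoord : HasDerivWithinAt (fun r ↦ ![x r, y r, z r]) ![x', y', z'] s r :=
    hasDerivWithinAt_pi.2 (Fin.forall_fin_succ.2 ⟨hx, Fin.forall_fin_two.2 ⟨hy, hz⟩⟩)
  exact (EuclideanSpace.equiv (Fin 3) ℝ).symm.hasFDerivAt.comp_hasDerivWithinAt r hcoord

theorem hasDerivWithinAt_integral_Icc {E : Type*} [NormedAddCommGroup E] [NormedSpace ℝ E]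
    [CompleteSpace E] {h : ℝ → E} {a b c x : ℝ} (hh : ContinuousOn h (Icc a b))
    (hc : c ∈ Icc a b) (hx : x ∈ Icc a b) :
    HasDerivWithinAt (fun y ↦ ∫ w in c..y, h w) (h x) (Icc a b) x := by
  have : Fact (x ∈ Icc a b) := ⟨hx⟩
  exact intervalIntegral.integral_hasDerivWithinAt_right
    (hh.mono (uIcc_subset_Icc hc hx)).intervalIntegrable
    (hh.stronglyMeasurableAtFilter_nhdsWithin measurableSet_Icc x) (hh x hx)

/-- The parametrized surface `σ`, restricted to `s ×ˢ t`, has first fundamental form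
`E du² + 2F du dv + G dv²` at `(u, v)`. The partial derivatives are taken within `s` and `t`, so
that boundary points of a parameter rectangle are allowed. -/
def HasFirstFundamentalFormWithinAt {V : Type*} [NormedAddCommGroup V] [InnerProductSpace ℝ V]
    (σ : ℝ → ℝ → V) (E F G : ℝ) (s t : Set ℝ) (u v : ℝ) : Prop :=
  ∃ σu σv : V,
    HasDerivWithinAt (fun u' ↦ σ u' v) σu s u ∧ HasDerivWithinAt (fun v' ↦ σ u v') σv t v ∧
      ‖σu‖ ^ 2 = E ∧ inner ℝ σu σv = F ∧ ‖σv‖ ^ 2 = G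

/-- The planar curve through the origin with velocity `g (-sin ψ, cos ψ)`, in coordinates; it
serves as the directrix `γ` of a molding surface. -/
noncomputable def directrix (g ψ : ℝ → ℝ) (u : ℝ) : ℝ × ℝ :=
  (∫ w in (0 : ℝ)..u, -(g w * sin (ψ w)), ∫ w in (0 : ℝ)..u, g w * cos (ψ w))

/-- The molding surface `(γ(u) + f(v) n(u), z(v))`, where `n = (cos ψ, sin ψ)`. -/
noncomputable def moldingSurface (γ : ℝ → ℝ × ℝ) (ψ f z : ℝ → ℝ) (u v : ℝ) :
    EuclideanSpace ℝ (Fin 3) :=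
  e3 ((γ u).1 + f v * cos (ψ u)) ((γ u).2 + f v * sin (ψ u)) (z v)

/-- The surface `σᵗ` obtained from the molding surface over `directrix g ψ` by scaling `ψ` by `eᵗ`
and `f` by `e⁻ᵗ` and adjusting the height function. The derivatives `f'` and `z'` of the profile
are passed as functions of their own. -/
noncomputable def moldingDeformation (g ψ f f' z' : ℝ → ℝ) (t : ℝ) :
    ℝ → ℝ → EuclideanSpace ℝ (Fin 3) :=
  moldingSurface (directrix g fun u ↦ exp t * ψ u) (fun u ↦ exp t * ψ u) (fun v ↦ exp (-t) * f v)
    fun v ↦ ∫ w in (0 : ℝ)..v, √(z' w ^ 2 + (1 - exp (-2 * t)) * f' w ^ 2)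

theorem hasDerivWithinAt_directrix {g ψ : ℝ → ℝ} {a b u : ℝ} (hg : ContinuousOn g (Icc a b))
    (hψ : ContinuousOn ψ (Icc a b)) (h0 : 0 ∈ Icc a b) (hu : u ∈ Icc a b) :
    HasDerivWithinAt (directrix g ψ) (-(g u * sin (ψ u)), g u * cos (ψ u)) (Icc a b) u :=
  (hasDerivWithinAt_integral_Icc (hg.mul (continuous_sin.comp_continuousOn hψ)).neg h0 hu).prodMk
    (hasDerivWithinAt_integral_Icc (hg.mul (continuous_cos.comp_continuousOn hψ)) h0 hu)

theorem hasFirstFundamentalFormWithinAt_moldingSurface {γ : ℝ → ℝ × ℝ} {ψ f z : ℝ → ℝ}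
    {g ψ' f' z' u v : ℝ} {s t : Set ℝ}
    (hγ : HasDerivWithinAt γ (-(g * sin (ψ u)), g * cos (ψ u)) s u)
    (hψ : HasDerivWithinAt ψ ψ' s u) (hf : HasDerivWithinAt f f' t v)
    (hz : HasDerivWithinAt z z' t v) :
    HasFirstFundamentalFormWithinAt (moldingSurface γ ψ f z)
      ((g + f v * ψ') ^ 2) 0 (f' ^ 2 + z' ^ 2) s t u v := by
  have hx : HasDerivWithinAt (fun u' ↦ (γ u').1) (-(g * sin (ψ u))) s u :=
    (hasFDerivAt_fst (𝕜 := ℝ) (p := γ u)).comp_hasDerivWithinAt u hγ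
  have hy : HasDerivWithinAt (fun u' ↦ (γ u').2) (g * cos (ψ u)) s u :=
    (hasFDerivAt_snd (𝕜 := ℝ) (p := γ u)).comp_hasDerivWithinAt u hγ
  have hσu : HasDerivWithinAt (fun u' ↦ moldingSurface γ ψ f z u' v)
      (e3 (-((g + f v * ψ') * sin (ψ u))) ((g + f v * ψ') * cos (ψ u)) 0) s u :=
    (hasDerivWithinAt_e3 (hx.add (hψ.cos.const_mul (f v))) (hy.add (hψ.sin.const_mul (f v)))
      (hasDerivWithinAt_const u s (z v))).congr_deriv (by congr 1 <;> ring)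
  have hσv : HasDerivWithinAt (fun v' ↦ moldingSurface γ ψ f z u v')
      (e3 (f' * cos (ψ u)) (f' * sin (ψ u)) z') t v :=
    hasDerivWithinAt_e3 ((hf.mul_const _).const_add _) ((hf.mul_const _).const_add _) hz
  have hframe := sin_sq_add_cos_sq (ψ u)
  refine ⟨_, _, hσu, hσv, ?_, ?_, ?_⟩
  · rw [norm_e3_sq]
    linear_combination (g + f v * ψ') ^ 2 * hframe
  · rw [inner_e3]
    ring
  · rw [norm_e3_sq]
    linear_combination f' ^ 2 * hframe

theorem hasFirstFundamentalFormWithinAt_moldingDeformation {g ψ f f' z' : ℝ → ℝ}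
    {ψ' a b c d t u v : ℝ} (hg : ContinuousOn g (Icc a b))
    (hψ : ContinuousOn ψ (Icc a b)) (hψ' : HasDerivWithinAt ψ ψ' (Icc a b) u)
    (hf : HasDerivWithinAt f (f' v) (Icc c d) v)
    (hf' : ContinuousOn f' (Icc c d)) (hz' : ContinuousOn z' (Icc c d))
    (ht : 0 ≤ z' v ^ 2 + (1 - exp (-2 * t)) * f' v ^ 2)
    (h0u : 0 ∈ Icc a b) (hu : u ∈ Icc a b) (h0v : 0 ∈ Icc c d) (hv : v ∈ Icc c d) :
    HasFirstFundamentalFormWithinAt (moldingDeformation g ψ f f' z' t)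
      ((g u + f v * ψ') ^ 2) 0 (f' v ^ 2 + z' v ^ 2) (Icc a b) (Icc c d) u v := by
  have hheight : ContinuousOn (fun w ↦ √(z' w ^ 2 + (1 - exp (-2 * t)) * f' w ^ 2)) (Icc c d) :=
    ((hz'.pow 2).add (continuousOn_const.mul (hf'.pow 2))).sqrt
  have hform := hasFirstFundamentalFormWithinAt_moldingSurface
    (hasDerivWithinAt_directrix hg (hψ.const_mul (exp t)) h0u hu) (hψ'.const_mul (exp t))
    (hf.const_mul (exp (-t))) (hasDerivWithinAt_integral_Icc hheight h0v hv)
  have hE : exp (-t) * f v * (exp t * ψ') = f v * ψ' := by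
    rw [exp_neg]
    field_simp
  have hexp : exp (-2 * t) = exp (-t) ^ 2 := by
    rw [← exp_nat_mul]
    ring_nf
  have hG : (exp (-t) * f' v) ^ 2 + √(z' v ^ 2 + (1 - exp (-2 * t)) * f' v ^ 2) ^ 2 =
      f' v ^ 2 + z' v ^ 2 := by
    rw [sq_sqrt ht, hexp]
    ring
  rwa [hE, hG] at hform

theorem stmt_14_general {a b t u v : ℝ} {g ψ ψ' f z f' z' : ℝ → ℝ}
    (hg : ContinuousOn g (Icc 0 a))
    (hψ : ∀ u ∈ Icc 0 a, HasDerivWithinAt ψ (ψ' u) (Icc 0 a) u)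
    (hf : ∀ v ∈ Icc 0 b, HasDerivWithinAt f (f' v) (Icc 0 b) v)
    (hz : ∀ v ∈ Icc 0 b, HasDerivWithinAt z (z' v) (Icc 0 b) v)
    (hf' : ContinuousOn f' (Icc 0 b)) (hz' : ContinuousOn z' (Icc 0 b))
    (ht : ∀ v ∈ Icc 0 b, 0 ≤ z' v ^ 2 + (1 - exp (-2 * t)) * f' v ^ 2)
    (hu : u ∈ Icc 0 a) (hv : v ∈ Icc 0 b) :
    HasFirstFundamentalFormWithinAt (moldingSurface (directrix g ψ) ψ f z)
        ((g u + f v * ψ' u) ^ 2) 0 (f' v ^ 2 + z' v ^ 2) (Icc 0 a) (Icc 0 b) u v ∧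
      HasFirstFundamentalFormWithinAt (moldingDeformation g ψ f f' z' t)
        ((g u + f v * ψ' u) ^ 2) 0 (f' v ^ 2 + z' v ^ 2) (Icc 0 a) (Icc 0 b) u v := by
  have hψc : ContinuousOn ψ (Icc 0 a) := fun w hw ↦ (hψ w hw).continuousWithinAt
  have h0u : 0 ∈ Icc 0 a := left_mem_Icc.2 (hu.1.trans hu.2)
  have h0v : 0 ∈ Icc 0 b := left_mem_Icc.2 (hv.1.trans hv.2)
  exact ⟨hasFirstFundamentalFormWithinAt_moldingSurface
      (hasDerivWithinAt_directrix hg hψc h0u hu) (hψ u hu) (hf v hv) (hz v hv),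
    hasFirstFundamentalFormWithinAt_moldingDeformation hg hψc (hψ u hu) (hf v hv) hf' hz' (ht v hv)
      h0u hu h0v hv⟩

/-- **Theorem 5.4.** The explicit isometric deformation of a molding surface
`σ⁰(u,v) = (γ(u) + f(v)n(u), z(v))`: the deformed surface `σᵗ` has first fundamental form
`E = (g + f ψ')²`, `F = 0`, `G = f'² + z'²`, independent of `t`. -/
theorem stmt_14 (a b : ℝ)
    (g ψ ψ' f z f' z' : ℝ → ℝ)
    (hg : ContinuousOn g (Icc 0 a))
    (hψ : ∀ u ∈ Icc 0 a, HasDerivWithinAt ψ (ψ' u) (Icc 0 a) u)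
    (hψ' : ContinuousOn ψ' (Icc 0 a))
    (hf : ∀ v ∈ Icc 0 b, HasDerivWithinAt f (f' v) (Icc 0 b) v)
    (hz : ∀ v ∈ Icc 0 b, HasDerivWithinAt z (z' v) (Icc 0 b) v)
    (hf' : ContinuousOn f' (Icc 0 b)) (hz' : ContinuousOn z' (Icc 0 b))
    (hz'pos : ∀ v ∈ Icc 0 b, 0 < z' v)
    (t : ℝ)
    (ht : ∀ v ∈ Icc 0 b, 0 ≤ z' v ^ 2 + (1 - Real.exp (-2 * t)) * f' v ^ 2)
    (σ : ℝ → ℝ → EuclideanSpace ℝ (Fin 3))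
    (hσ : ∀ u v, σ u v =
      e3 ((∫ w in (0:ℝ)..u, -(g w * sin (Real.exp t * ψ w))) +
            Real.exp (-t) * f v * cos (Real.exp t * ψ u))
         ((∫ w in (0:ℝ)..u, g w * cos (Real.exp t * ψ w)) +
            Real.exp (-t) * f v * sin (Real.exp t * ψ u))
         (∫ w in (0:ℝ)..v, Real.sqrt (z' w ^ 2 + (1 - Real.exp (-2 * t)) * f' w ^ 2))) :
    ∀ u ∈ Icc 0 a, ∀ v ∈ Icc 0 b,
      ∃ su sv : EuclideanSpace ℝ (Fin 3),
        HasDerivWithinAt (fun u' => σ u' v) su (Icc 0 a) u ∧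
        HasDerivWithinAt (fun v' => σ u v') sv (Icc 0 b) v ∧
        ‖su‖ ^ 2 = (g u + f v * ψ' u) ^ 2 ∧
        (inner ℝ su sv : ℝ) = 0 ∧
        ‖sv‖ ^ 2 = f' v ^ 2 + z' v ^ 2 := by
  obtain rfl : σ = moldingDeformation g ψ f f' z' t := funext₂ hσ
  exact fun u hu v hv ↦ (stmt_14_general hg hψ hf hz hf' hz' ht hu hv).2
end
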